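/- arXiv:2208.09595 — 12 statements merged into one kernel-verified Lean document; each statement's English description precedes it below -/
import Mathlib

section
/- Let P be a Borel probability measure on ℝ^d that is symmetric around the origin (P(A) = P(−A) for every Borel set A), let s ∈ ℝ^d, λ ∈ [0,1], and γ ≥ 1. Let T_sP be the translate of P by s (T_sP(A) = P(A − s)) and set Q = (1−λ)P + λT_sP. Then the hockey-stick divergences satisfy E_γ(P‖Q) ≤ E_γ(Q‖P). -/
open MeasureTheory Real

/-- The hockey-stick divergence `E_γ(P‖Q) = sup_{A measurable} P(A) - γ Q(A)`. -/
noncomputable def hsDiv {α : Type*} [MeasurableSpace α] (γ : ℝ)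
    (P Q : Measure α) : ℝ :=
  ⨆ A : {A : Set α // MeasurableSet A}, ((P A.1).toReal - γ * (Q A.1).toReal)

theorem stmt0 (d : ℕ) (P : Measure (EuclideanSpace ℝ (Fin d))) [IsProbabilityMeasure P]
    (hsym : ∀ A : Set (EuclideanSpace ℝ (Fin d)), MeasurableSet A →
      P A = P ((fun x => -x) ⁻¹' A))
    (s : EuclideanSpace ℝ (Fin d)) (lam : ℝ) (hlam : lam ∈ Set.Icc (0 : ℝ) 1)
    (γ : ℝ) (hγ : 1 ≤ γ)
    (Q : Measure (EuclideanSpace ℝ (Fin d)))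
    (hQ : Q = ENNReal.ofReal (1 - lam) • P + ENNReal.ofReal lam • P.map (· + s)) :
    hsDiv γ P Q ≤ hsDiv γ Q P := by
  obtain ⟨h0, h1⟩ := hlam
  have hTm : Measurable (fun x : EuclideanSpace ℝ (Fin d) => x + s) := measurable_id.add_const s
  have : IsProbabilityMeasure (P.map (· + s)) :=
    Measure.isProbabilityMeasure_map hTm.aemeasurable
  have hQv : ∀ A : Set (EuclideanSpace ℝ (Fin d)), (Q A).toReal
      = (1 - lam) * (P A).toReal + lam * ((P.map (· + s)) A).toReal := by
    intro A
    rw [hQ, Measure.add_apply, Measure.smul_apply, Measure.smul_apply, smul_eq_mul, smul_eq_mul,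
      ENNReal.toReal_add (ENNReal.mul_ne_top ENNReal.ofReal_ne_top (measure_ne_top _ _))
        (ENNReal.mul_ne_top ENNReal.ofReal_ne_top (measure_ne_top _ _)),
      ENNReal.toReal_mul, ENNReal.toReal_mul, ENNReal.toReal_ofReal (by linarith),
      ENNReal.toReal_ofReal h0]
  have le1 : ∀ (R : Measure (EuclideanSpace ℝ (Fin d))) [IsProbabilityMeasure R] (A : Set _),
      (R A).toReal ≤ 1 := fun R _ A => ENNReal.toReal_le_of_le_ofReal zero_le_one
        (by simpa using prob_le_one)
  have hbdd : BddAbove (Set.range fun A : {A : Set (EuclideanSpace ℝ (Fin d)) // MeasurableSet A} =>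
      ((Q A.1).toReal - γ * (P A.1).toReal)) := by
    refine ⟨1, ?_⟩
    rintro _ ⟨A, rfl⟩
    have a1 := le1 P A.1
    have a2 := le1 (P.map (· + s)) A.1
    have a3 : 0 ≤ (P A.1).toReal := ENNReal.toReal_nonneg
    simp only [hQv]
    nlinarith [mul_nonneg (by linarith : (0:ℝ) ≤ γ) a3]
  unfold hsDiv
  have : Nonempty {A : Set (EuclideanSpace ℝ (Fin d)) // MeasurableSet A} :=
    ⟨⟨∅, MeasurableSet.empty⟩⟩
  refine ciSup_le fun ⟨A, hA⟩ => ?_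
  have hemp := le_ciSup hbdd ⟨∅, MeasurableSet.empty⟩
  simp only [measure_empty, ENNReal.toReal_zero, mul_zero, sub_zero] at hemp
  have hrm : Measurable (fun x : EuclideanSpace ℝ (Fin d) => s - x) := measurable_id.const_sub s
  have hB : MeasurableSet ((fun x => s - x) ⁻¹' A) := hrm hA
  have hmain := le_ciSup hbdd ⟨(fun x => s - x) ⁻¹' A, hB⟩
  have e1 : P ((fun x => s - x) ⁻¹' A) = (P.map (· + s)) A := by
    rw [hsym _ hB, Measure.map_apply hTm hA]
    congr 1
    ext x
    simp [add_comm]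
  have e2 : (P.map (· + s)) ((fun x => s - x) ⁻¹' A) = P A := by
    rw [Measure.map_apply hTm hB, hsym A hA]
    congr 1
    ext x
    simp
  simp only [hQv, e1, e2] at hmain
  simp only [hQv] at hemp ⊢
  have p0 : 0 ≤ (P A).toReal := ENNReal.toReal_nonneg
  have t0 : 0 ≤ ((P.map (· + s)) A).toReal := ENNReal.toReal_nonneg
  generalize (P A).toReal = p at *
  generalize ((P.map (· + s)) A).toReal = t at *
  rcases le_or_gt (p - γ * ((1 - lam) * p + lam * t)) 0 with hx | hx
  · exact hx.trans hemp
  refine le_trans ?_ hmain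
  have hl : 0 ≤ γ * lam * t := by positivity
  have ha : 0 < 1 - γ * (1 - lam) := by
    by_contra hc
    push Not at hc
    nlinarith [mul_nonneg p0 (sub_nonneg.2 hc)]
  have hal : 1 - γ * (1 - lam) ≤ lam := by nlinarith
  have key : lam * (p - γ * ((1 - lam) * p + lam * t))
      ≤ (1 - γ * (1 - lam)) * ((1 - lam) * t + lam * p - γ * t) := by
    have : 0 ≤ (γ - 1) ^ 2 * (1 - lam) * t :=
      mul_nonneg (mul_nonneg (sq_nonneg _) (by linarith)) t0
    nlinarith
  refine le_of_mul_le_mul_left (le_trans ?_ key) ha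
  exact mul_le_mul_of_nonneg_right hal hx.le
end

section
/- Let P be a Borel probability measure on ℝ^d that is symmetric around the origin (P(A) = P(−A) for every Borel set A), let s ∈ ℝ^d, and let T_sP be the translate of P by s (T_sP(A) = P(A − s)). Then for every γ ≥ 1, E_γ(P‖T_sP) = E_γ(T_sP‖P). -/
open MeasureTheory Real

theorem stmt2 (d : ℕ) (P : Measure (EuclideanSpace ℝ (Fin d))) [IsProbabilityMeasure P]
    (hsym : ∀ A : Set (EuclideanSpace ℝ (Fin d)), MeasurableSet A →
      P A = P ((fun x => -x) ⁻¹' A))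
    (s : EuclideanSpace ℝ (Fin d)) (γ : ℝ) (hγ : 1 ≤ γ) :
    hsDiv γ P (P.map (· + s)) = hsDiv γ (P.map (· + s)) P := by
  have hφ : Measurable (fun x : EuclideanSpace ℝ (Fin d) => s - x) := by fun_prop
  have ht : Measurable (fun x : EuclideanSpace ℝ (Fin d) => x + s) := by fun_prop
  have h1 : ∀ A, MeasurableSet A → (P.map (· + s)) ((fun x => s - x) ⁻¹' A) = P A := by
    intro A hA
    rw [Measure.map_apply ht (hφ hA), hsym A hA]
    congr 1
    ext x
    simp
  have h2 : ∀ A, MeasurableSet A → P ((fun x => s - x) ⁻¹' A) = (P.map (· + s)) A := by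
    intro A hA
    rw [Measure.map_apply ht hA, hsym _ (ht hA)]
    congr 1
    ext x
    simp [sub_eq_neg_add]
  let e : {A : Set (EuclideanSpace ℝ (Fin d)) // MeasurableSet A} ≃
      {A : Set (EuclideanSpace ℝ (Fin d)) // MeasurableSet A} :=
    { toFun := fun A => ⟨(fun x => s - x) ⁻¹' A.1, hφ A.2⟩
      invFun := fun A => ⟨(fun x => s - x) ⁻¹' A.1, hφ A.2⟩
      left_inv := fun A => by
        apply Subtype.ext
        ext x
        simp
      right_inv := fun A => by
        apply Subtype.ext
        ext x
        simp }
  unfold hsDiv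
  refine Equiv.iSup_congr e fun A => ?_
  change ((P.map (· + s)) ((fun x => s - x) ⁻¹' A.1)).toReal
    - γ * (P ((fun x => s - x) ⁻¹' A.1)).toReal = _
  rw [h1 A.1 A.2, h2 A.1 A.2]
end

section
/- Let P and Q be mutually absolutely continuous probability measures on a measurable space, and let L = log(dP/dQ)(X) with X ∼ P (the privacy loss random variable). Then for every ε ≥ 0, the hockey-stick divergence satisfies E_{e^ε}(P‖Q) = E[(1 − e^{−(L−ε)})^+]. -/
open MeasureTheory Real

/-- For mutually absolutely continuous probability measures `P, Q`, the hockey-stick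
divergence `E_{e^ε}(P‖Q)` equals `E[(1 - e^{-(L-ε)})⁺]`, where `L = log (dP/dQ)(X)`
is the privacy loss random variable with `X ∼ P`. -/
theorem stmt4 {α : Type*} [MeasurableSpace α] (P Q : Measure α)
    [IsProbabilityMeasure P] [IsProbabilityMeasure Q]
    (hPQ : P ≪ Q) (hQP : Q ≪ P) (ε : ℝ) (hε : 0 ≤ ε) :
    hsDiv (Real.exp ε) P Q =
      ∫ x, max (1 - Real.exp (-(Real.log ((P.rnDeriv Q x).toReal) - ε))) 0 ∂P := by
  set f : α → ℝ := fun x => 1 - Real.exp ε * (Q.rnDeriv P x).toReal with hf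
  have hfm : Measurable f :=
    measurable_const.sub ((Measure.measurable_rnDeriv Q P).ennreal_toReal.const_mul _)
  have hgi : Integrable (fun x => Real.exp ε * (Q.rnDeriv P x).toReal) P :=
    Measure.integrable_toReal_rnDeriv.const_mul _
  have hfi : Integrable f P := (integrable_const (1 : ℝ)).sub hgi
  have hmi : Integrable (fun x => max (f x) 0) P := hfi.pos_part
  have hR : ∫ x, max (1 - Real.exp (-(Real.log ((P.rnDeriv Q x).toReal) - ε))) 0 ∂P
      = ∫ x, max (f x) 0 ∂P := by
    apply integral_congr_ae
    filter_upwards [exp_neg_llr hPQ] with x hx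
    have hx' : Real.exp (-Real.log ((P.rnDeriv Q x).toReal)) = (Q.rnDeriv P x).toReal := hx
    have : -(Real.log ((P.rnDeriv Q x).toReal) - ε)
        = ε + -Real.log ((P.rnDeriv Q x).toReal) := by ring
    simp only [hf]
    rw [this, Real.exp_add, hx']
  have hA : ∀ A : Set α, MeasurableSet A →
      (P A).toReal - Real.exp ε * (Q A).toReal = ∫ x in A, f x ∂P := by
    intro A hAm
    have h1 : ∫ x in A, (Q.rnDeriv P x).toReal ∂P = (Q A).toReal :=
      Measure.setIntegral_toReal_rnDeriv hQP A
    simp only [hf]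
    rw [integral_sub (integrable_const (1 : ℝ)) hgi.integrableOn, integral_const_mul, h1]
    simp [Measure.real]
  have hle : ∀ A : {A : Set α // MeasurableSet A},
      (P A.1).toReal - Real.exp ε * (Q A.1).toReal ≤ ∫ x, max (f x) 0 ∂P := by
    rintro ⟨A, hAm⟩
    simp only
    rw [hA A hAm]
    calc ∫ x in A, f x ∂P ≤ ∫ x in A, max (f x) 0 ∂P :=
          integral_mono hfi.integrableOn hmi.integrableOn (fun x => le_max_left _ _)
      _ ≤ ∫ x, max (f x) 0 ∂P :=
          setIntegral_le_integral hmi (Filter.Eventually.of_forall fun x => le_max_right _ _)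
  rw [hR]
  unfold hsDiv
  haveI : Nonempty {A : Set α // MeasurableSet A} := ⟨⟨∅, MeasurableSet.empty⟩⟩
  apply le_antisymm (ciSup_le hle)
  have hS : MeasurableSet {x | 0 < f x} := measurableSet_lt measurable_const hfm
  have heq : ∫ x, max (f x) 0 ∂P
      = (P {x | 0 < f x}).toReal - Real.exp ε * (Q {x | 0 < f x}).toReal := by
    rw [hA _ hS, ← integral_indicator hS]
    congr 1
    funext x
    by_cases h : 0 < f x
    · rw [Set.indicator_of_mem (show x ∈ {x | 0 < f x} from h), max_eq_left h.le]
    · rw [Set.indicator_of_notMem (show x ∉ {x | 0 < f x} from h), max_eq_right (not_lt.mp h)]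
  rw [heq]
  exact le_ciSup (f := fun A : {A : Set α // MeasurableSet A} =>
    (P A.1).toReal - Real.exp ε * (Q A.1).toReal)
    ⟨_, by rintro _ ⟨A, rfl⟩; exact hle A⟩ ⟨_, hS⟩
end

section
/- Let L be a real random variable, let t ≥ 0 satisfy M_L(t) = E[e^{tL}] < ∞, and let L̃ be the exponential tilting of L with parameter t. Then for every ε ≥ 0, δ_L(ε) = exp(K_L(t) − εt) · E[e^{−t(L̃−ε)}(1 − e^{−(L̃−ε)})^+], where K_L(t) = log M_L(t). -/
open MeasureTheory Real

/-- The exponential tilting, with parameter `t`, of the law of a real random variable: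
the measure with density `u ↦ e^{tu} / M` with respect to the law of `L`, where
`M = E[e^{tL}]` is the moment generating function evaluated at `t`. -/
noncomputable def tiltedLaw {Ω : Type*} [MeasurableSpace Ω] (μ : Measure Ω)
    (L : Ω → ℝ) (t : ℝ) : Measure ℝ :=
  (μ.map L).withDensity
    (fun u => ENNReal.ofReal (Real.exp (t * u) / ∫ ω, Real.exp (t * L ω) ∂μ))

/-- `δ_L(ε) = exp(K_L(t) - εt) · E[e^{-t(L̃-ε)} (1 - e^{-(L̃-ε)})⁺]`, where `L̃` is the
exponential tilting of `L` with parameter `t` and `K_L(t) = log E[e^{tL}]`. -/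
theorem stmt5 {Ω : Type*} [MeasurableSpace Ω] (μ : Measure Ω) [IsProbabilityMeasure μ]
    (L : Ω → ℝ) (hL : Measurable L) (t : ℝ) (ht : 0 ≤ t)
    (hM : Integrable (fun ω => Real.exp (t * L ω)) μ) (ε : ℝ) (hε : 0 ≤ ε) :
    (∫ ω, max (1 - Real.exp (-(L ω - ε))) 0 ∂μ) =
      Real.exp ((Real.log (∫ ω, Real.exp (t * L ω) ∂μ)) - ε * t) *
        ∫ u, Real.exp (-t * (u - ε)) * max (1 - Real.exp (-(u - ε))) 0
          ∂(tiltedLaw μ L t) := by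
  have hpos : 0 < ∫ ω, Real.exp (t * L ω) ∂μ := integral_exp_pos hM
  unfold tiltedLaw
  set M := ∫ ω, Real.exp (t * L ω) ∂μ with hMdef
  rw [integral_withDensity_eq_integral_toReal_smul (by fun_prop)
    (Filter.Eventually.of_forall fun _ => ENNReal.ofReal_lt_top),
    integral_map hL.aemeasurable (by
      apply Measurable.aestronglyMeasurable
      fun_prop), ← integral_const_mul]
  refine integral_congr_ae (Filter.Eventually.of_forall fun ω => ?_)
  have h1 : 0 ≤ Real.exp (t * L ω) / M := by positivity
  simp only [smul_eq_mul]
  rw [ENNReal.toReal_ofReal h1, Real.exp_sub, Real.exp_log hpos]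
  have h2 : Real.exp (t * L ω) * Real.exp (-t * (L ω - ε)) = Real.exp (ε * t) := by
    rw [← Real.exp_add]
    congr 1
    ring
  have h3 : Real.exp (ε * t) ≠ 0 := (Real.exp_pos _).ne'
  have h4 : ∀ x : ℝ, M / Real.exp (ε * t) * (Real.exp (t * L ω) / M *
      (Real.exp (-t * (L ω - ε)) * x)) =
      (Real.exp (t * L ω) * Real.exp (-t * (L ω - ε))) / Real.exp (ε * t) * (M / M) * x := by
    intro x
    ring
  rw [h4, h2, div_self h3, div_self hpos.ne']
  ring
end

section
/- Let L be a real random variable and ε ≥ 0. For every t ≥ 0 with M_L(t) = E[e^{tL}] < ∞, it holds that δ_L(ε) ≤ exp(K_L(t) − εt); consequently δ_L(ε) ≤ inf_{t ≥ 0} exp(K_L(t) − εt) (the moments accountant bound). -/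
open MeasureTheory Real

/-- The moments accountant bound: for every `t ≥ 0` at which the MGF is finite,
`δ_L(ε) ≤ exp(K_L(t) - εt)`, and consequently `δ_L(ε) ≤ inf_{t ≥ 0} exp(K_L(t) - εt)`. -/
theorem stmt6 {Ω : Type*} [MeasurableSpace Ω] (μ : Measure Ω) [IsProbabilityMeasure μ]
    (L : Ω → ℝ) (hL : Measurable L) (ε : ℝ) (hε : 0 ≤ ε) :
    (∀ t : ℝ, 0 ≤ t → Integrable (fun ω => Real.exp (t * L ω)) μ →
      (∫ ω, max (1 - Real.exp (-(L ω - ε))) 0 ∂μ) ≤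
        Real.exp ((Real.log (∫ ω, Real.exp (t * L ω) ∂μ)) - ε * t)) ∧
    (∫ ω, max (1 - Real.exp (-(L ω - ε))) 0 ∂μ) ≤
      ⨅ t : {t : ℝ // 0 ≤ t ∧ Integrable (fun ω => Real.exp (t * L ω)) μ},
        Real.exp ((Real.log (∫ ω, Real.exp (t.1 * L ω) ∂μ)) - ε * t.1) := by
  have key : ∀ t : ℝ, 0 ≤ t → Integrable (fun ω => Real.exp (t * L ω)) μ →
      (∫ ω, max (1 - Real.exp (-(L ω - ε))) 0 ∂μ) ≤
        Real.exp ((Real.log (∫ ω, Real.exp (t * L ω) ∂μ)) - ε * t) := by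
    intro t ht hint
    have hpos : 0 < ∫ ω, Real.exp (t * L ω) ∂μ := integral_exp_pos hint
    rw [sub_eq_add_neg (Real.log _), Real.exp_add, Real.exp_log hpos, ← integral_mul_const]
    refine integral_mono_of_nonneg (Filter.Eventually.of_forall fun ω => le_max_right _ _)
      (hint.mul_const _) (Filter.Eventually.of_forall fun ω => ?_)
    show max (1 - Real.exp (-(L ω - ε))) 0 ≤ Real.exp (t * L ω) * Real.exp (-(ε * t))
    rw [← Real.exp_add]
    refine max_le ?_ (Real.exp_pos _).le
    rcases le_total (L ω) ε with h | h
    · have h1 : 1 ≤ Real.exp (-(L ω - ε)) := Real.one_le_exp (by linarith)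
      have h2 := Real.exp_pos (t * L ω + -(ε * t))
      linarith
    · have h1 := Real.exp_pos (-(L ω - ε))
      have h2 : 1 ≤ Real.exp (t * L ω + -(ε * t)) := Real.one_le_exp (by nlinarith)
      linarith
  refine ⟨key, ?_⟩
  haveI : Nonempty {t : ℝ // 0 ≤ t ∧ Integrable (fun ω => Real.exp (t * L ω)) μ} :=
    ⟨⟨0, le_refl _, by simp⟩⟩
  exact le_ciInf fun t => key t.1 t.2.1 t.2.2
end

section
/- Let L be a real random variable and ε ≥ 0. For every t > 0 with M_L(t) = E[e^{tL}] < ∞, it holds that δ_L(ε) ≤ exp(K_L(t) − εt + t·log t − (t+1)·log(t+1)); this bound strictly tightens the moments accountant bound exp(K_L(t) − εt) for t > 0. -/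
open MeasureTheory Real

theorem stmt8_pointwise (t x : ℝ) (ht : 0 < t) :
    max (1 - Real.exp (-x)) 0 ≤
      Real.exp (t * Real.log t - (t + 1) * Real.log (t + 1)) * Real.exp (t * x) := by
  refine max_le ?_ (by positivity)
  have h1 : (0 : ℝ) < t + 1 := by linarith
  have e1 : Real.exp (-x) = t * Real.exp (-x - Real.log t + Real.log (t + 1)) / (t + 1) := by
    rw [Real.exp_add, Real.exp_sub, Real.exp_log ht, Real.exp_log h1]
    field_simp
  have e2 : Real.exp (t * Real.log t - (t + 1) * Real.log (t + 1)) * Real.exp (t * x)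
      = Real.exp (-t * (-x - Real.log t + Real.log (t + 1))) / (t + 1) := by
    have h : ∀ y : ℝ, y / (t + 1) = y / Real.exp (Real.log (t + 1)) := by
      intro y
      rw [Real.exp_log h1]
    rw [h, ← Real.exp_add, ← Real.exp_sub]
    congr 1
    ring
  rw [e1, e2]
  generalize -x - Real.log t + Real.log (t + 1) = s
  have a := Real.add_one_le_exp s
  have b := Real.add_one_le_exp (-t * s)
  have c := mul_le_mul_of_nonneg_left a ht.le
  rw [sub_le_iff_le_add, ← add_div, le_div_iff₀ h1]
  linarith

/-- Refined moments accountant: for `t > 0` with `M_L(t) < ∞`,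
`δ_L(ε) ≤ exp(K_L(t) - εt + t log t - (t+1) log(t+1))`, and this bound is a strict
improvement over the moments accountant bound `exp(K_L(t) - εt)`. -/
theorem stmt8 {Ω : Type*} [MeasurableSpace Ω] (μ : Measure Ω) [IsProbabilityMeasure μ]
    (L : Ω → ℝ) (hL : Measurable L) (ε : ℝ) (hε : 0 ≤ ε)
    (t : ℝ) (ht : 0 < t) (hM : Integrable (fun ω => Real.exp (t * L ω)) μ) :
    (∫ ω, max (1 - Real.exp (-(L ω - ε))) 0 ∂μ) ≤
      Real.exp ((Real.log (∫ ω, Real.exp (t * L ω) ∂μ)) - ε * t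
        + t * Real.log t - (t + 1) * Real.log (t + 1)) ∧
    Real.exp ((Real.log (∫ ω, Real.exp (t * L ω) ∂μ)) - ε * t
        + t * Real.log t - (t + 1) * Real.log (t + 1)) <
      Real.exp ((Real.log (∫ ω, Real.exp (t * L ω) ∂μ)) - ε * t) := by
  have h1 : (0 : ℝ) < t + 1 := by linarith
  constructor
  · have hpos : 0 < ∫ ω, Real.exp (t * L ω) ∂μ := integral_exp_pos hM
    have key : Real.exp ((Real.log (∫ ω, Real.exp (t * L ω) ∂μ)) - ε * t
        + t * Real.log t - (t + 1) * Real.log (t + 1)) =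
        ∫ ω, Real.exp (t * Real.log t - (t + 1) * Real.log (t + 1) - ε * t)
          * Real.exp (t * L ω) ∂μ := by
      rw [integral_const_mul]
      nth_rewrite 2 [← Real.exp_log hpos]
      rw [← Real.exp_add]
      congr 1
      ring
    rw [key]
    refine integral_mono_of_nonneg (Filter.Eventually.of_forall fun ω => le_max_right _ _)
      (hM.const_mul _) (Filter.Eventually.of_forall fun ω => ?_)
    refine (stmt8_pointwise t (L ω - ε) ht).trans (le_of_eq ?_)
    simp only [← Real.exp_add]
    congr 1
    ring
  · apply Real.exp_lt_exp.mpr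
    have h2 : Real.log t < Real.log (t + 1) := Real.log_lt_log ht (by linarith)
    have h3 : 0 < Real.log (t + 1) := Real.log_pos (by linarith)
    nlinarith [mul_lt_mul_of_pos_left h2 ht]
end

section
/- For every t > 0 and every x ∈ ℝ, with f(x,t) = e^{−tx} − e^{−(t+1)x}, f_x(x,t) = −t e^{−tx} + (t+1) e^{−(t+1)x}, f_{xx}(x,t) = t² e^{−tx} − (t+1)² e^{−(t+1)x}, and x₀ = 3·log((t+1)/t), the function f̄(x,t) = e^{−xt}(1 − e^{−x})^+ satisfies the quadratic upper bound f̄(x,t) ≤ f(x₀,t) + f_x(x₀,t)·(x − x₀) + (1/2)·f_{xx}(x₀,t)·(x − x₀)². -/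
open Real


/-- Normalised second derivative is nonnegative (weighted AM-GM). -/
lemma aux2 (t a : ℝ) (ht : 0 < t) (ha : (t + 1) * a = t) (h : ℝ) :
    0 ≤ t ^ 2 * (1 - a) - t ^ 2 * exp (-t * h) + a * t ^ 2 * exp (-(t + 1) * h) := by
  have ha0 : 0 < a := by
    by_contra hc
    push Not at hc
    nlinarith
  have ha1 : a < 1 := by nlinarith
  have e1 := Real.add_one_le_exp (t * h)
  have e2 := Real.add_one_le_exp (-h)
  have h1 : exp (-t * h) * exp (t * h) = 1 := by rw [← exp_add]; simp
  have h2 : exp (-(t + 1) * h) = exp (-t * h) * exp (-h) := by rw [← exp_add]; ring_nf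
  have key : 1 ≤ (1 - a) * exp (t * h) + a * exp (-h) := by
    have k1 := mul_le_mul_of_nonneg_left e1 (by linarith : 0 ≤ 1 - a)
    have k2 := mul_le_mul_of_nonneg_left e2 ha0.le
    have k3 : (1 - a) * (t * h + 1) + a * (-h + 1) = 1 := by
      linear_combination (-h) * ha
    linarith
  have k := mul_le_mul_of_nonneg_left key (by positivity : 0 ≤ t ^ 2 * exp (-t * h))
  rw [h2]
  have : t ^ 2 * (1 - a) = t ^ 2 * (1 - a) * (exp (-t * h) * exp (t * h)) := by rw [h1, mul_one]
  rw [this]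
  linarith

lemma hasDerivAt_exp_lin (c h : ℝ) : HasDerivAt (fun y : ℝ => exp (c * y)) (c * exp (c * h)) h := by
  have := ((hasDerivAt_id h).const_mul c).exp
  simpa [mul_comm] using this

/-- Taylor bound in normalised form. -/
lemma aux0 (t a : ℝ) (ht : 0 < t) (ha : (t + 1) * a = t) (h : ℝ) :
    0 ≤ 1 - a ^ 3 + t * (a ^ 2 - 1) * h + t ^ 2 / 2 * (1 - a) * h ^ 2
      - exp (-t * h) + a ^ 3 * exp (-(t + 1) * h) := by
  set G : ℝ → ℝ := fun h => 1 - a ^ 3 + t * (a ^ 2 - 1) * h + t ^ 2 / 2 * (1 - a) * h ^ 2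
      - exp (-t * h) + a ^ 3 * exp (-(t + 1) * h) with hG
  set G1 : ℝ → ℝ := fun h => t * (a ^ 2 - 1) + t ^ 2 * (1 - a) * h
      + t * exp (-t * h) - a ^ 2 * t * exp (-(t + 1) * h) with hG1
  have d1 : ∀ y, HasDerivAt G (G1 y) y := by
    intro y
    have := (((((hasDerivAt_id y).const_mul (t * (a ^ 2 - 1))).const_add (1 - a ^ 3)).add
      (((hasDerivAt_id y).pow 2).const_mul (t ^ 2 / 2 * (1 - a)))).sub
      (hasDerivAt_exp_lin (-t) y)).add ((hasDerivAt_exp_lin (-(t + 1)) y).const_mul (a ^ 3))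
    refine this.congr_deriv ?_
    simp only [hG1, id]
    push_cast
    linear_combination (-a ^ 2 * exp (-(t + 1) * y)) * ha
  have d2 : ∀ y, HasDerivAt G1 (t ^ 2 * (1 - a) - t ^ 2 * exp (-t * y)
      + a * t ^ 2 * exp (-(t + 1) * y)) y := by
    intro y
    have := (((((hasDerivAt_id y).const_mul (t ^ 2 * (1 - a))).const_add (t * (a ^ 2 - 1))).add
      ((hasDerivAt_exp_lin (-t) y).const_mul t))).sub
      ((hasDerivAt_exp_lin (-(t + 1)) y).const_mul (a ^ 2 * t))
    refine this.congr_deriv ?_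
    linear_combination (a * t * exp (-(t + 1) * y)) * ha
  have m1 : Monotone G1 := monotone_of_hasDerivAt_nonneg d2 (fun y => aux2 t a ht ha y)
  have z1 : G1 0 = 0 := by simp [hG1]; ring
  have z0 : G 0 = 0 := by simp [hG]
  have cG : Continuous G := continuous_iff_continuousAt.2 fun y => (d1 y).continuousAt
  change 0 ≤ G h
  rw [← z0]
  rcases le_total 0 h with hh | hh
  · refine monotoneOn_of_deriv_nonneg (convex_Ici 0) cG.continuousOn
      (fun y _ => (d1 y).differentiableAt.differentiableWithinAt) ?_
      Set.self_mem_Ici hh hh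
    intro y hy
    rw [interior_Ici] at hy
    rw [(d1 y).deriv, ← z1]
    exact m1 (le_of_lt hy)
  · refine antitoneOn_of_deriv_nonpos (convex_Iic 0) cG.continuousOn
      (fun y _ => (d1 y).differentiableAt.differentiableWithinAt) ?_
      hh Set.self_mem_Iic hh
    intro y hy
    rw [interior_Iic] at hy
    rw [(d1 y).deriv, ← z1]
    exact m1 (le_of_lt hy)

/-- Quadratic upper bound on `f̄(x,t) = e^{-xt}(1 - e^{-x})⁺` obtained from the series
expansion of `f(x,t) = e^{-tx} - e^{-(t+1)x}` around `x₀ = 3 log((t+1)/t)`. -/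
theorem stmt9 (t : ℝ) (ht : 0 < t) (x : ℝ) :
    Real.exp (-x * t) * max (1 - Real.exp (-x)) 0 ≤
      (Real.exp (-t * (3 * Real.log ((t + 1) / t)))
        - Real.exp (-(t + 1) * (3 * Real.log ((t + 1) / t))))
      + (-t * Real.exp (-t * (3 * Real.log ((t + 1) / t)))
        + (t + 1) * Real.exp (-(t + 1) * (3 * Real.log ((t + 1) / t))))
          * (x - 3 * Real.log ((t + 1) / t))
      + (1 / 2) * (t ^ 2 * Real.exp (-t * (3 * Real.log ((t + 1) / t)))
        - (t + 1) ^ 2 * Real.exp (-(t + 1) * (3 * Real.log ((t + 1) / t))))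
          * (x - 3 * Real.log ((t + 1) / t)) ^ 2 := by
  have hr : 0 < (t + 1) / t := by positivity
  have hx0 : 0 < Real.log ((t + 1) / t) := by
    apply Real.log_pos
    rw [lt_div_iff₀ ht]
    linarith
  obtain ⟨a, hadef⟩ : ∃ a, a = t / (t + 1) := ⟨_, rfl⟩
  have ha : (t + 1) * a = t := by rw [hadef]; field_simp
  have ha0 : 0 < a := by rw [hadef]; positivity
  have ha1 : a < 1 := by nlinarith
  have hexp : exp (-(3 * Real.log ((t + 1) / t))) = a ^ 3 := by
    have : -(3 * Real.log ((t + 1) / t)) = ((3 : ℕ) : ℝ) * Real.log a := by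
      rw [hadef, ← inv_div t (t + 1), Real.log_inv]
      push_cast
      ring
    rw [this, Real.exp_nat_mul, Real.exp_log ha0]
  have hpos : 0 < 3 * Real.log ((t + 1) / t) := by positivity
  generalize 3 * Real.log ((t + 1) / t) = x0 at *
  have hE2 : exp (-(t + 1) * x0) = exp (-t * x0) * a ^ 3 := by
    rw [← hexp, ← exp_add]; ring_nf
  have hEpos := exp_pos (-t * x0)
  rw [hE2]
  have hq : (exp (-t * x0) - exp (-t * x0) * a ^ 3)
      + (-t * exp (-t * x0) + (t + 1) * (exp (-t * x0) * a ^ 3)) * (x - x0)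
      + (1 / 2) * (t ^ 2 * exp (-t * x0) - (t + 1) ^ 2 * (exp (-t * x0) * a ^ 3)) * (x - x0) ^ 2
      = exp (-t * x0) * (1 - a ^ 3 + t * (a ^ 2 - 1) * (x - x0)
        + t ^ 2 / 2 * (1 - a) * (x - x0) ^ 2) := by
    linear_combination (exp (-t * x0) * a ^ 2 * (x - x0)
      - (1 / 2) * exp (-t * x0) * a * ((t + 1) * a + t) * (x - x0) ^ 2) * ha
  rw [hq]
  rcases le_total 0 x with hx | hx
  · have h1 : exp (-x) ≤ 1 := by
      rw [Real.exp_le_one_iff]; linarith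
    rw [max_eq_left (by linarith)]
    have k := mul_nonneg hEpos.le (aux0 t a ht ha (x - x0))
    have e1 : exp (-t * x0) * exp (-t * (x - x0)) = exp (-x * t) := by
      rw [← exp_add]; ring_nf
    have e2 : exp (-t * x0) * (a ^ 3 * exp (-(t + 1) * (x - x0))) = exp (-x * t) * exp (-x) := by
      rw [← hexp, ← exp_add, ← exp_add, ← exp_add]; ring_nf
    linarith
  · have h1 : 1 ≤ exp (-x) := by
      rw [Real.one_le_exp_iff]; linarith
    rw [max_eq_right (by linarith), mul_zero]
    apply mul_nonneg hEpos.le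
    have p1 : a ^ 3 ≤ 1 := pow_le_one₀ ha0.le ha1.le
    have p2 : a ^ 2 ≤ 1 := pow_le_one₀ ha0.le ha1.le
    have p3 : 0 ≤ t * (1 - a ^ 2) * (x0 - x) :=
      mul_nonneg (mul_nonneg ht.le (by linarith)) (by linarith)
    have p4 : 0 ≤ t ^ 2 / 2 * (1 - a) * (x - x0) ^ 2 :=
      mul_nonneg (mul_nonneg (by positivity) (by linarith)) (by positivity)
    linarith
end

section
/- Let L be a real random variable with M_L(t) = E[e^{tL}] < ∞ in a neighborhood of t₀, and let ε ≥ 0 and t₀ > 0 satisfy K_L'(t₀) = ε + 3·log((t₀+1)/t₀). Then δ_L(ε) ≤ exp(K_L(t₀) − ε t₀) · ( f(x₀(t₀), t₀) + t₀·(t₀/(1+t₀))^{1+3t₀}·K_L''(t₀) ), where x₀(t) = 3·log((t+1)/t) and f(x,t) = e^{−xt}(1 − e^{−x}). -/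
open MeasureTheory Real

theorem aux_pt (t q y : ℝ) (ht : 0 < t) (hq0 : 0 < q) (hq : q * (t + 1) = t) :
    Real.exp (-(t * y)) - q ^ 3 * Real.exp (-((t + 1) * y)) ≤
      (1 - q ^ 3) - t * (1 - q ^ 2) * y + (t * q / 2) * y ^ 2 := by
  let h : ℝ → ℝ := fun y => Real.exp (-(t * y)) - q ^ 3 * Real.exp (-((t + 1) * y)) -
      ((1 - q ^ 3) - t * (1 - q ^ 2) * y + (t * q / 2) * y ^ 2)
  let h' : ℝ → ℝ := fun y => -t * Real.exp (-(t * y)) + q ^ 2 * t * Real.exp (-((t + 1) * y)) -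
      (- t * (1 - q ^ 2) + (t * q) * y)
  let h'' : ℝ → ℝ := fun y => t ^ 2 * Real.exp (-(t * y)) -
      q * t ^ 2 * Real.exp (-((t + 1) * y)) - t * q
  have e1 : ∀ s y : ℝ, HasDerivAt (fun y => Real.exp (-(s * y))) (-s * Real.exp (-(s * y))) y := by
    intro s y
    have := (((hasDerivAt_id y).const_mul s).neg).exp
    refine HasDerivAt.congr_deriv (f := fun y => Real.exp (-(s * y))) this ?_
    simp only [Pi.neg_apply, id]; ring
  have d1 : ∀ y, HasDerivAt h (h' y) y := by
    intro y
    have := ((e1 t y).sub ((e1 (t+1) y).const_mul (q^3))).sub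
      ((((hasDerivAt_id y).const_mul (t * (1 - q ^ 2))).const_sub (1 - q^3)).add
        (((hasDerivAt_id y).pow 2).const_mul (t * q / 2)))
    refine HasDerivAt.congr_deriv (f := h) this ?_
    simp only [h', id]
    have : q ^ 2 * t = q ^ 3 * (t + 1) := by rw [pow_succ q 2, mul_assoc, hq]
    rw [this]; push_cast; ring
  have d2 : ∀ y, HasDerivAt h' (h'' y) y := by
    intro y
    have := (((e1 t y).const_mul (-t)).add ((e1 (t+1) y).const_mul (q^2*t))).sub
      (((hasDerivAt_id y).const_mul (t * q)).const_add (- t * (1 - q ^ 2)))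
    refine HasDerivAt.congr_deriv (f := h') this ?_
    simp only [h'']
    have : q * t ^ 2 = q ^ 2 * t * (t + 1) := by linear_combination (-q * t) * hq
    rw [this]; ring
  have h2 : ∀ y, h'' y ≤ 0 := by
    intro y
    have a1 := Real.add_one_le_exp (-y)
    have a2 := Real.add_one_le_exp (t * y)
    have hq1 : 0 < 1 - q := by nlinarith
    have a3 : 1 ≤ q * Real.exp (-y) + (1 - q) * Real.exp (t * y) := by
      have b1 := mul_le_mul_of_nonneg_left a1 hq0.le
      have b2 := mul_le_mul_of_nonneg_left a2 hq1.le
      have : (1 - q) * (t * y) = q * y := by linear_combination (-y) * hq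
      nlinarith
    have p := Real.exp_pos (-(t * y))
    have e2 : Real.exp (-((t + 1) * y)) = Real.exp (-(t * y)) * Real.exp (-y) := by
      rw [← Real.exp_add]; congr 1; ring
    have e3 : Real.exp (-(t * y)) * Real.exp (t * y) = 1 := by
      rw [← Real.exp_add]; simp
    have : h'' y = t ^ 2 * Real.exp (-(t * y)) *
        (1 - (q * Real.exp (-y) + (1 - q) * Real.exp (t * y))) := by
      simp only [h'', e2]
      linear_combination (t ^ 2 * (1 - q)) * e3 - t * hq
    rw [this]
    exact mul_nonpos_of_nonneg_of_nonpos (by positivity) (by linarith)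
  have anti : Antitone h' := antitone_of_deriv_nonpos (fun y => (d2 y).differentiableAt)
    (fun y => by rw [(d2 y).deriv]; exact h2 y)
  have z' : h' 0 = 0 := by simp [h']; ring
  have z : h 0 = 0 := by simp [h]
  have hc : Continuous h := continuous_iff_continuousAt.2 fun y => (d1 y).continuousAt
  have key : h y ≤ 0 := by
    rcases le_total 0 y with hy | hy
    · have := antitoneOn_of_deriv_nonpos (convex_Ici (0:ℝ)) hc.continuousOn
        (fun y _ => (d1 y).differentiableAt.differentiableWithinAt) (fun y hy => by
          rw [(d1 y).deriv, ← z']; exact anti (interior_subset hy))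
      rw [← z]; exact this (by simp) hy hy
    · have := monotoneOn_of_deriv_nonneg (convex_Iic (0:ℝ)) hc.continuousOn
        (fun y _ => (d1 y).differentiableAt.differentiableWithinAt) (fun y hy => by
          rw [(d1 y).deriv, ← z']; exact anti (Set.mem_Iic.1 (interior_subset hy)))
      rw [← z]; exact this hy (by simp) hy
  simp only [h] at key
  linarith

theorem aux_nonneg (t q y : ℝ) (ht : 0 < t) (hq0 : 0 < q) (hq : q * (t + 1) = t) :
    0 ≤ (1 - q ^ 3) - t * (1 - q ^ 2) * y + (t * q / 2) * y ^ 2 := by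
  have hq1 : 0 < 1 - q := by nlinarith
  have e : t * (1 - q) = q := by linear_combination -hq
  have : (1 - q ^ 3) - t * (1 - q ^ 2) * y + (t * q / 2) * y ^ 2 =
    (1 - q ^ 3) - q * (1 + q) * y + (t * q / 2) * y ^ 2 := by
    linear_combination (-(1 + q) * y) * e
  rw [this]
  have : 0 ≤ (1 - q) * ((1 - q ^ 3) - q * (1 + q) * y + (t * q / 2) * y ^ 2) := by
    have : (1 - q) * ((1 - q ^ 3) - q * (1 + q) * y + (t * q / 2) * y ^ 2) =
      (q * y - (1 - q) * (1 + q)) ^ 2 / 2 + (1 - q) ^ 2 * (1 + q ^ 2) / 2 := by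
      linear_combination (q * y ^ 2 / 2) * e
    rw [this]; positivity
  exact nonneg_of_mul_nonneg_right this hq1

theorem aux_main (t ε l : ℝ) (ht : 0 < t) (m a : ℝ) (ha : a = Real.log ((t + 1) / t))
    (hm : m = ε + 3 * a) :
    max (1 - Real.exp (-(l - ε))) 0 ≤ Real.exp (-(ε * t)) * (Real.exp (t * l) *
      (Real.exp (-(3 * a) * t) * (1 - Real.exp (-(3 * a)))
        - Real.exp (-(3 * a) * t) * (t * (1 - (t / (1 + t)) ^ 2)) * (l - m)
        + t * (t / (1 + t)) ^ (1 + 3 * t) * (l - m) ^ 2)) := by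
  obtain ⟨q, hqd⟩ : ∃ q, q = t / (1 + t) := ⟨_, rfl⟩
  have hq0 : 0 < q := by rw [hqd]; positivity
  have hq : q * (t + 1) = t := by rw [hqd]; field_simp; ring
  have hqa : q = Real.exp (-a) := by
    rw [ha, Real.exp_neg, Real.exp_log (by positivity), hqd, inv_div, add_comm]
  have hpow : q ^ (1 + 3 * t) = q * Real.exp (-(3 * a) * t) := by
    rw [Real.rpow_add hq0, Real.rpow_one, hqa, ← Real.exp_mul]; congr 2; ring
  have h3 : Real.exp (-(3 * a)) = q ^ 3 := by
    rw [hqa, ← Real.exp_nat_mul]; congr 1; push_cast; ring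
  rw [← hqd, hpow, h3]
  have A := aux_pt t q (l - m) ht hq0 hq
  have B := aux_nonneg t q (l - m) ht hq0 hq
  have C : 0 ≤ (t * q / 2) * (l - m) ^ 2 := by positivity
  set P := Real.exp (-(ε * t)) * (Real.exp (t * l) * Real.exp (-(3 * a) * t)) with hP
  have hPp : 0 < P := by positivity
  have hPe : P = Real.exp (t * (l - m)) := by
    rw [hP, ← Real.exp_add, ← Real.exp_add, hm]; congr 1; ring
  have eq : Real.exp (-(ε * t)) * (Real.exp (t * l) *
      (Real.exp (-(3 * a) * t) * (1 - q ^ 3)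
        - Real.exp (-(3 * a) * t) * (t * (1 - q ^ 2)) * (l - m)
        + t * (q * Real.exp (-(3 * a) * t)) * (l - m) ^ 2)) =
      P * ((1 - q ^ 3) - t * (1 - q ^ 2) * (l - m) + (t * q / 2) * (l - m) ^ 2
        + (t * q / 2) * (l - m) ^ 2) := by rw [hP]; ring
  rw [eq]
  apply max_le
  · have : 1 - Real.exp (-(l - ε)) = P * (Real.exp (-(t * (l - m))) -
        q ^ 3 * Real.exp (-((t + 1) * (l - m)))) := by
      rw [hPe, ← h3, mul_sub, ← mul_assoc, ← Real.exp_add, ← Real.exp_add, ← Real.exp_add, hm]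
      congr 1
      · simp
      · congr 1; ring
    rw [this]
    exact mul_le_mul_of_nonneg_left (by linarith) hPp.le
  · positivity

/-- Quadratic-bound refinement of the moments accountant: if `t₀ > 0` solves
`K_L'(t₀) = ε + 3 log((t₀+1)/t₀)`, then
`δ_L(ε) ≤ exp(K_L(t₀) - ε t₀) (f(x₀(t₀), t₀) + t₀ (t₀/(1+t₀))^{1+3t₀} K_L''(t₀))`,
where `x₀(t) = 3 log((t+1)/t)` and `f(x,t) = e^{-xt}(1-e^{-x})`. -/
theorem stmt10 {Ω : Type*} [MeasurableSpace Ω] (μ : Measure Ω) [IsProbabilityMeasure μ]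
    (L : Ω → ℝ) (hL : Measurable L)
    (K : ℝ → ℝ) (hK : K = fun t => Real.log (∫ ω, Real.exp (t * L ω) ∂μ))
    (t₀ : ℝ) (ht₀ : 0 < t₀)
    (hM : ∃ r > (0 : ℝ), ∀ t : ℝ, |t - t₀| < r →
      Integrable (fun ω => Real.exp (t * L ω)) μ)
    (ε : ℝ) (hε : 0 ≤ ε)
    (hsaddle : deriv K t₀ = ε + 3 * Real.log ((t₀ + 1) / t₀)) :
    (∫ ω, max (1 - Real.exp (-(L ω - ε))) 0 ∂μ) ≤
      Real.exp (K t₀ - ε * t₀) *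
        (Real.exp (-(3 * Real.log ((t₀ + 1) / t₀)) * t₀)
            * (1 - Real.exp (-(3 * Real.log ((t₀ + 1) / t₀))))
          + t₀ * (t₀ / (1 + t₀)) ^ (1 + 3 * t₀) * deriv (deriv K) t₀) := by
  have hK' : K = ProbabilityTheory.cgf L μ := hK
  have hint : t₀ ∈ interior (ProbabilityTheory.integrableExpSet L μ) := by
    obtain ⟨r, hr, h⟩ := hM
    rw [mem_interior_iff_mem_nhds]
    filter_upwards [Metric.ball_mem_nhds t₀ hr] with t ht
    exact h t (by simpa [Real.dist_eq] using ht)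
  have hI0 : Integrable (fun ω => Real.exp (t₀ * L ω)) μ :=
    interior_subset (s := ProbabilityTheory.integrableExpSet L μ) hint
  have hIn := ProbabilityTheory.integrable_pow_mul_exp_of_mem_interior_integrableExpSet hint
  have hI1 : Integrable (fun ω => L ω * Real.exp (t₀ * L ω)) μ := by simpa using hIn 1
  have hI2 : Integrable (fun ω => L ω ^ 2 * Real.exp (t₀ * L ω)) μ := hIn 2
  have D1 := ProbabilityTheory.deriv_cgf hint
  have D2 := ProbabilityTheory.iteratedDeriv_two_cgf_eq_integral hint
  rw [iteratedDeriv_succ, iteratedDeriv_one] at D2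
  rw [← hK'] at D1 D2
  have hMp : 0 < ProbabilityTheory.mgf L μ t₀ := ProbabilityTheory.mgf_pos hI0
  have hexp : Real.exp (K t₀) = ProbabilityTheory.mgf L μ t₀ := by
    rw [hK']; exact ProbabilityTheory.exp_cgf hI0
  rw [eq_div_iff hMp.ne'] at D1 D2
  have hpt := fun ω => aux_main t₀ ε (L ω) ht₀ (deriv K t₀) _ rfl hsaddle
  generalize Real.exp (-(3 * Real.log ((t₀ + 1) / t₀)) * t₀)
            * (1 - Real.exp (-(3 * Real.log ((t₀ + 1) / t₀)))) = A at hpt ⊢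
  generalize Real.exp (-(3 * Real.log ((t₀ + 1) / t₀)) * t₀)
            * (t₀ * (1 - (t₀ / (1 + t₀)) ^ 2)) = B at hpt
  generalize t₀ * (t₀ / (1 + t₀)) ^ (1 + 3 * t₀) = C at hpt ⊢
  generalize deriv K t₀ = m at *
  have J1 : Integrable (fun ω => (L ω - m) * Real.exp (t₀ * L ω)) μ := by
    refine (hI1.sub (hI0.const_mul m)).congr (Filter.Eventually.of_forall fun ω => ?_)
    simp only [Pi.sub_apply]; ring
  have J2 : Integrable (fun ω => (L ω - m) ^ 2 * Real.exp (t₀ * L ω)) μ := by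
    refine ((hI2.sub (hI1.const_mul (2 * m))).add (hI0.const_mul (m ^ 2))).congr
      (Filter.Eventually.of_forall fun ω => ?_)
    simp only [Pi.sub_apply, Pi.add_apply]; ring
  have E1 : ∫ ω, (L ω - m) * Real.exp (t₀ * L ω) ∂μ = 0 := by
    have : ∫ ω, (L ω - m) * Real.exp (t₀ * L ω) ∂μ =
        ∫ ω, (L ω * Real.exp (t₀ * L ω) - m * Real.exp (t₀ * L ω)) ∂μ :=
      integral_congr_ae (Filter.Eventually.of_forall fun ω => by simp only []; ring)
    rw [this, integral_sub hI1 (hI0.const_mul m), integral_const_mul]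
    unfold ProbabilityTheory.mgf at D1
    linarith
  have J : Integrable (fun ω => A * Real.exp (t₀ * L ω) - B * ((L ω - m) * Real.exp (t₀ * L ω))
      + C * ((L ω - m) ^ 2 * Real.exp (t₀ * L ω))) μ :=
    ((hI0.const_mul A).sub (J1.const_mul B)).add (J2.const_mul C)
  have E : ∫ ω, (A * Real.exp (t₀ * L ω) - B * ((L ω - m) * Real.exp (t₀ * L ω))
      + C * ((L ω - m) ^ 2 * Real.exp (t₀ * L ω))) ∂μ =
      Real.exp (K t₀) * (A + C * deriv (deriv K) t₀) := by
    have J3 : Integrable (fun ω => A * Real.exp (t₀ * L ω)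
        - B * ((L ω - m) * Real.exp (t₀ * L ω))) μ := (hI0.const_mul A).sub (J1.const_mul B)
    rw [integral_add J3 (J2.const_mul C),
      integral_sub (hI0.const_mul A) (J1.const_mul B), integral_const_mul, integral_const_mul,
      integral_const_mul, E1, ← D2, hexp]
    unfold ProbabilityTheory.mgf
    ring
  rw [sub_eq_add_neg, Real.exp_add, mul_comm (Real.exp (K t₀)), mul_assoc, ← E,
    ← integral_const_mul]
  refine integral_mono_of_nonneg (Filter.Eventually.of_forall fun ω => le_max_right _ _)
    (J.const_mul _) (Filter.Eventually.of_forall fun ω => (hpt ω).trans (le_of_eq ?_))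
  simp only []
  ring
end

section
/- Let Z be a Gaussian random variable with mean μ ∈ ℝ and variance σ² > 0. Then for every t > 0 and every ε ∈ ℝ, E[e^{−t(Z−ε)}(1 − e^{−(Z−ε)})^+] ≤ 1/(√(2πσ²) · t · (t+1)). In particular, for a real random variable L with K_L finite at t, the SP-CLT approximation δ_{L,SP-CLT}(ε) = e^{K_L(t)−εt}·E[e^{−t(Z−ε)}(1 − e^{−(Z−ε)})^+], with Z Gaussian of mean K_L'(t) and variance K_L''(t) > 0, satisfies δ_{L,SP-CLT}(ε) ≤ e^{K_L(t)−εt}/(√(2π K_L''(t))·t·(t+1)). -/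
open MeasureTheory ProbabilityTheory Real

lemma gauss_aux (t : ℝ) (ht : 0 < t) (ε m v : ℝ) (hv : 0 < v) :
    (∫ z, Real.exp (-t * (z - ε)) * max (1 - Real.exp (-(z - ε))) 0
          ∂(gaussianReal m v.toNNReal)) ≤
        1 / (Real.sqrt (2 * π * v) * t * (t + 1)) := by
  have hv' : v.toNNReal ≠ 0 := by simpa using hv
  have hc : ((v.toNNReal : NNReal) : ℝ) = v := Real.coe_toNNReal _ hv.le
  rw [integral_gaussianReal_eq_integral_smul hv']
  set g : ℝ → ℝ := fun x => Real.exp (-t * x) * max (1 - Real.exp (-x)) 0 with hg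
  have hgi : g = (Set.Ioi (0:ℝ)).indicator
      (fun x => Real.exp ((-t) * x) - Real.exp ((-(t+1)) * x)) := by
    funext x
    by_cases hx : 0 < x
    · have h1 : Real.exp (-x) ≤ 1 := Real.exp_le_one_iff.2 (by linarith)
      rw [Set.indicator_of_mem (by exact hx)]
      simp only [hg]
      rw [max_eq_left (by linarith), mul_sub, ← Real.exp_add]
      ring_nf
    · have h1 : 1 ≤ Real.exp (-x) := Real.one_le_exp (by linarith)
      rw [Set.indicator_of_notMem (by exact hx)]
      simp only [hg]
      rw [max_eq_right (by linarith), mul_zero]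
  have i1 := integrableOn_exp_mul_Ioi (a := -t) (by linarith) 0
  have i2 := integrableOn_exp_mul_Ioi (a := -(t+1)) (by linarith) 0
  have hint : Integrable g := by
    rw [hgi, integrable_indicator_iff measurableSet_Ioi]
    exact i1.sub i2
  have hval : ∫ x, g x = 1 / (t * (t + 1)) := by
    rw [hgi, integral_indicator measurableSet_Ioi, integral_sub i1 i2,
      integral_exp_mul_Ioi (by linarith), integral_exp_mul_Ioi (by linarith)]
    have : t + 1 ≠ 0 := by positivity
    simp only [mul_zero, Real.exp_zero, neg_div_neg_eq]
    field_simp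
    ring
  have hnn : ∀ x, 0 ≤ g x := fun x => by simp only [hg]; positivity
  calc _ ≤ ∫ z, (√(2 * π * v))⁻¹ * g (z - ε) := by
        apply integral_mono_of_nonneg
        · exact Filter.Eventually.of_forall fun z =>
            mul_nonneg (gaussianPDFReal_nonneg _ _ _) (hnn (z - ε))
        · exact (hint.comp_sub_right ε).const_mul _
        · refine Filter.Eventually.of_forall fun z =>
            mul_le_mul_of_nonneg_right ?_ (hnn (z - ε))
          rw [gaussianPDFReal, hc]
          refine mul_le_of_le_one_right (by positivity) (Real.exp_le_one_iff.2 ?_)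
          rw [neg_div]
          exact neg_nonpos.2 (by positivity)
    _ = (√(2 * π * v))⁻¹ * (1 / (t * (t + 1))) := by
        rw [integral_const_mul, integral_sub_right_eq_self g, hval]
    _ = _ := by
        rw [mul_assoc (√(2 * π * v)), one_div, one_div, mul_inv (√(2 * π * v))]

/-- For `Z` Gaussian with mean `m` and variance `v > 0` and any `t > 0`,
`E[e^{-t(Z-ε)}(1-e^{-(Z-ε)})⁺] ≤ 1/(√(2πv) t (t+1))`; consequently the SP-CLT
approximation (with `Z` of mean `K_L'(t)` and variance `K_L''(t) > 0`) satisfies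
`δ_{L,SP-CLT}(ε) ≤ e^{K_L(t)-εt}/(√(2π K_L''(t)) t (t+1))`. -/
theorem stmt12 {Ω : Type*} [MeasurableSpace Ω] (μ : Measure Ω) [IsProbabilityMeasure μ]
    (L : Ω → ℝ) (hL : Measurable L)
    (K : ℝ → ℝ) (hK : K = fun t => Real.log (∫ ω, Real.exp (t * L ω) ∂μ))
    (t : ℝ) (ht : 0 < t)
    (hM : Integrable (fun ω => Real.exp (t * L ω)) μ)
    (hvar : 0 < deriv (deriv K) t) (ε : ℝ) :
    (∀ m v : ℝ, 0 < v →
      (∫ z, Real.exp (-t * (z - ε)) * max (1 - Real.exp (-(z - ε))) 0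
          ∂(gaussianReal m v.toNNReal)) ≤
        1 / (Real.sqrt (2 * π * v) * t * (t + 1))) ∧
    Real.exp (K t - ε * t) *
        (∫ z, Real.exp (-t * (z - ε)) * max (1 - Real.exp (-(z - ε))) 0
          ∂(gaussianReal (deriv K t) (deriv (deriv K) t).toNNReal)) ≤
      Real.exp (K t - ε * t) /
        (Real.sqrt (2 * π * deriv (deriv K) t) * t * (t + 1)) := by
  refine ⟨fun m v hv => gauss_aux t ht ε m v hv, ?_⟩
  rw [div_eq_mul_one_div]
  exact mul_le_mul_of_nonneg_left (gauss_aux t ht ε _ _ hvar) (Real.exp_pos _).le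
end

section
/- Let Z be a Gaussian random variable with mean m ∈ ℝ and variance v > 0, let t > 0 and ε ∈ ℝ, and set γ = (m − ε)/√v, α = √v·t − γ, and β = √v·(t+1) − γ. Then E[e^{−t(Z−ε)}(1 − e^{−(Z−ε)})^+] = e^{−γ²/2} · (q(α) − q(β))/√(2π), where q(z) = Q(z)·√(2π)·e^{z²/2} and Q(z) = 1 − Φ(z) with Φ the standard normal CDF. Consequently, for a random variable L with K_L finite at t, the SP-CLT approximation δ_{L,SP-CLT}(ε) = e^{K_L(t)−εt}·E[e^{−t(Z−ε)}(1 − e^{−(Z−ε)})^+] with m = K_L'(t), v = K_L''(t) equals exp(K_L(t) − εt − γ²/2)·(q(α) − q(β))/√(2π). -/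
open MeasureTheory ProbabilityTheory Real

/-- The standard normal CDF `Φ`. -/
noncomputable def stdNormalCDF (z : ℝ) : ℝ := (gaussianReal 0 1 (Set.Iic z)).toReal

/-- `q(z) = Q(z)·√(2π)·e^{z²/2}` where `Q(z) = 1 - Φ(z)`. -/
noncomputable def qFun (z : ℝ) : ℝ :=
  (1 - stdNormalCDF z) * Real.sqrt (2 * π) * Real.exp (z ^ 2 / 2)

lemma gauss_tail (m v ε : ℝ) (hv : 0 < v) :
    (gaussianReal m v.toNNReal).real (Set.Ioi ε) = 1 - stdNormalCDF ((ε - m) / Real.sqrt v) := by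
  have hs : 0 < Real.sqrt v := Real.sqrt_pos.mpr hv
  have h1 : gaussianReal m v.toNNReal
      = ((gaussianReal 0 1).map (fun x => Real.sqrt v * x)).map (fun x => x + m) := by
    rw [gaussianReal_map_const_mul, gaussianReal_map_add_const]
    congr 1
    · simp
    · ext
      simp [Real.sq_sqrt hv.le, hv.le]
  rw [h1, Measure.map_map (by fun_prop) (by fun_prop),
    map_measureReal_apply (by fun_prop) measurableSet_Ioi]
  have h2 : ((fun x => x + m) ∘ fun x => Real.sqrt v * x) ⁻¹' Set.Ioi ε
      = (Set.Iic ((ε - m) / Real.sqrt v))ᶜ := by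
    ext x
    simp only [Set.mem_preimage, Function.comp, Set.mem_Ioi, Set.mem_compl_iff, Set.mem_Iic,
      not_le, div_lt_iff₀ hs]
    constructor <;> intro h <;> linarith
  rw [h2, probReal_compl_eq_one_sub measurableSet_Iic]
  rfl

lemma pdf_shift (m v ε s z : ℝ) (hv : 0 < v) :
    gaussianPDFReal m v.toNNReal z * Real.exp (-s * (z - ε))
      = Real.exp (v * s ^ 2 / 2 - s * (m - ε)) * gaussianPDFReal (m - s * v) v.toNNReal z := by
  simp only [gaussianPDFReal, Real.coe_toNNReal _ hv.le]
  rw [mul_assoc, ← Real.exp_add, mul_left_comm, ← Real.exp_add]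
  congr 2
  field_simp
  ring

lemma key_ind (m v ε s : ℝ) (hv : 0 < v) :
    Integrable ((Set.Ioi ε).indicator (fun z => Real.exp (-s * (z - ε))))
      (gaussianReal m v.toNNReal) ∧
    ∫ z, (Set.Ioi ε).indicator (fun z => Real.exp (-s * (z - ε))) z
        ∂(gaussianReal m v.toNNReal) =
      Real.exp (-((m - ε) / Real.sqrt v) ^ 2 / 2) *
        (qFun (Real.sqrt v * s - (m - ε) / Real.sqrt v) / Real.sqrt (2 * π)) := by
  have hv' : v.toNNReal ≠ 0 := by simpa using hv
  have hs : 0 < Real.sqrt v := Real.sqrt_pos.mpr hv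
  constructor
  · refine Integrable.indicator ?_ measurableSet_Ioi
    have := (integrable_exp_mul_gaussianReal (μ := m) (v := v.toNNReal) (-s)).const_mul
      (Real.exp (s * ε))
    refine this.congr (Filter.Eventually.of_forall fun z => ?_)
    simp only []
    rw [← Real.exp_add]
    congr 1
    ring
  · have h1 : ∫ z, (Set.Ioi ε).indicator (fun z => Real.exp (-s * (z - ε))) z
        ∂(gaussianReal m v.toNNReal) = Real.exp (v * s ^ 2 / 2 - s * (m - ε)) *
        ∫ z, (Set.Ioi ε).indicator (fun _ => (1 : ℝ)) z
          ∂(gaussianReal (m - s * v) v.toNNReal) := by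
      rw [integral_gaussianReal_eq_integral_smul hv', integral_gaussianReal_eq_integral_smul hv',
        ← integral_const_mul]
      congr 1
      ext z
      by_cases hz : z ∈ Set.Ioi ε
      · simp only [Set.indicator_of_mem hz, smul_eq_mul, mul_one]
        exact pdf_shift m v ε s z hv
      · simp [Set.indicator_of_notMem hz]
    rw [h1, integral_indicator_const _ measurableSet_Ioi, gauss_tail _ _ _ hv]
    have h2 : (ε - (m - s * v)) / Real.sqrt v = Real.sqrt v * s - (m - ε) / Real.sqrt v := by
      field_simp
      rw [Real.sq_sqrt hv.le]
      ring
    have hp : Real.sqrt (2 * π) ≠ 0 := (Real.sqrt_pos.mpr (by positivity)).ne'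
    have h3 : v * s ^ 2 / 2 - s * (m - ε) = -((m - ε) / Real.sqrt v) ^ 2 / 2
        + (Real.sqrt v * s - (m - ε) / Real.sqrt v) ^ 2 / 2 := by
      have e1 : Real.sqrt v * ((m - ε) / Real.sqrt v) = m - ε := by field_simp
      have e2 : Real.sqrt v ^ 2 = v := Real.sq_sqrt hv.le
      linear_combination (-s ^ 2 / 2) * e2 + s * e1
    rw [h2, h3, Real.exp_add, qFun, smul_eq_mul]
    field_simp

lemma key_all (t ε m v : ℝ) (hv : 0 < v) :
      (∫ z, Real.exp (-t * (z - ε)) * max (1 - Real.exp (-(z - ε))) 0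
          ∂(gaussianReal m v.toNNReal)) =
        Real.exp (-((m - ε) / Real.sqrt v) ^ 2 / 2) *
          ((qFun (Real.sqrt v * t - (m - ε) / Real.sqrt v)
            - qFun (Real.sqrt v * (t + 1) - (m - ε) / Real.sqrt v)) / Real.sqrt (2 * π)) := by
  obtain ⟨i1, e1⟩ := key_ind m v ε t hv
  obtain ⟨i2, e2⟩ := key_ind m v ε (t + 1) hv
  rw [sub_div (qFun _) (qFun _), mul_sub (Real.exp _) (qFun _ / _), ← e1, ← e2, ← integral_sub i1 i2]
  congr 1
  ext z
  by_cases hz : z ∈ Set.Ioi ε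
  · have hz' : ε < z := hz
    rw [Set.indicator_of_mem hz, Set.indicator_of_mem hz, max_eq_left, mul_sub, mul_one,
      ← Real.exp_add]
    · congr 2
      ring
    · rw [sub_nonneg, Real.exp_le_one_iff]
      linarith
  · have hz' : z ≤ ε := not_lt.mp hz
    rw [Set.indicator_of_notMem hz, Set.indicator_of_notMem hz, max_eq_right]
    · simp
    · rw [sub_nonpos, Real.one_le_exp_iff]
      linarith

/-- Closed form of the Gaussian expectation in the SP-CLT approximation:
`E[e^{-t(Z-ε)}(1-e^{-(Z-ε)})⁺] = e^{-γ²/2}(q(α)-q(β))/√(2π)` for `Z ∼ N(m, v)`,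
where `γ = (m-ε)/√v`, `α = √v t - γ`, `β = √v (t+1) - γ`; consequently
`δ_{L,SP-CLT}(ε) = exp(K_L(t) - εt - γ²/2)(q(α)-q(β))/√(2π)`. -/
theorem stmt14 {Ω : Type*} [MeasurableSpace Ω] (μ : Measure Ω) [IsProbabilityMeasure μ]
    (L : Ω → ℝ) (hL : Measurable L)
    (K : ℝ → ℝ) (hK : K = fun t => Real.log (∫ ω, Real.exp (t * L ω) ∂μ))
    (t : ℝ) (ht : 0 < t)
    (hM : Integrable (fun ω => Real.exp (t * L ω)) μ)
    (hvar : 0 < deriv (deriv K) t) (ε : ℝ) :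
    (∀ m v : ℝ, 0 < v →
      (∫ z, Real.exp (-t * (z - ε)) * max (1 - Real.exp (-(z - ε))) 0
          ∂(gaussianReal m v.toNNReal)) =
        Real.exp (-((m - ε) / Real.sqrt v) ^ 2 / 2) *
          ((qFun (Real.sqrt v * t - (m - ε) / Real.sqrt v)
            - qFun (Real.sqrt v * (t + 1) - (m - ε) / Real.sqrt v)) / Real.sqrt (2 * π))) ∧
    Real.exp (K t - ε * t) *
        (∫ z, Real.exp (-t * (z - ε)) * max (1 - Real.exp (-(z - ε))) 0
          ∂(gaussianReal (deriv K t) (deriv (deriv K) t).toNNReal)) =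
      Real.exp (K t - ε * t
          - ((deriv K t - ε) / Real.sqrt (deriv (deriv K) t)) ^ 2 / 2) *
        ((qFun (Real.sqrt (deriv (deriv K) t) * t
              - (deriv K t - ε) / Real.sqrt (deriv (deriv K) t))
          - qFun (Real.sqrt (deriv (deriv K) t) * (t + 1)
              - (deriv K t - ε) / Real.sqrt (deriv (deriv K) t))) / Real.sqrt (2 * π)) := by
  refine ⟨fun m v hv => key_all t ε m v hv, ?_⟩
  rw [key_all t ε _ _ hvar, ← mul_assoc, ← Real.exp_add]
  congr 2
  ring
end

section
/- Let Z be a Gaussian random variable with mean μ ∈ ℝ and variance σ² > 0. Then for every ε ≥ μ, δ_Z(ε) = Φ((μ − ε)/σ) − e^{ε − μ + σ²/2} · Φ((μ − σ² − ε)/σ), where Φ is the standard normal CDF. -/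
open MeasureTheory ProbabilityTheory Real

lemma gauss_tail_s18 (m σ : ℝ) (hσ : 0 < σ) (ε : ℝ) :
    stdNormalCDF ((m - ε) / σ) =
      ∫ x in Set.Ici ε, gaussianPDFReal m (Real.toNNReal (σ ^ 2)) x := by
  have hv : Real.toNNReal (σ ^ 2) ≠ 0 := by
    simp [Real.toNNReal_eq_zero]; positivity
  have h1 : ((gaussianReal 0 1).map (fun x => σ * x)).map (fun x => m - x)
      = gaussianReal m (Real.toNNReal (σ ^ 2)) := by
    rw [gaussianReal_map_const_mul, gaussianReal_map_const_sub]
    congr 1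
    · simp
    · ext
      simp [Real.coe_toNNReal _ (sq_nonneg σ)]
  have h2 : gaussianReal m (Real.toNNReal (σ ^ 2)) (Set.Ici ε)
      = gaussianReal 0 1 (Set.Iic ((m - ε) / σ)) := by
    rw [← h1, Measure.map_apply (by fun_prop) measurableSet_Ici,
      Measure.map_apply (by fun_prop) (measurableSet_Ici.preimage (by fun_prop))]
    congr 1
    ext x
    simp only [Set.mem_preimage, Set.mem_Ici, Set.mem_Iic, le_div_iff₀ hσ]
    constructor <;> intro h <;> linarith
  rw [stdNormalCDF, ← h2, gaussianReal_apply_eq_integral _ hv, ENNReal.toReal_ofReal]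
  exact integral_nonneg fun x => gaussianPDFReal_nonneg _ _ _

/-- Privacy curve of a Gaussian: for `Z ∼ N(m, σ²)` with `σ > 0` and `ε ≥ m`,
`δ_Z(ε) = Φ((m-ε)/σ) - e^{ε-m+σ²/2} Φ((m-σ²-ε)/σ)`. -/
theorem stmt18 (m σ : ℝ) (hσ : 0 < σ) (ε : ℝ) (hε : m ≤ ε) :
    (∫ z, max (1 - Real.exp (-(z - ε))) 0
        ∂(gaussianReal m (Real.toNNReal (σ ^ 2)))) =
      stdNormalCDF ((m - ε) / σ)
        - Real.exp (ε - m + σ ^ 2 / 2) * stdNormalCDF ((m - σ ^ 2 - ε) / σ) := by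
  have hv : Real.toNNReal (σ ^ 2) ≠ 0 := by
    simp [Real.toNNReal_eq_zero]; positivity
  rw [gauss_tail_s18 m σ hσ, gauss_tail_s18 _ σ hσ, integral_gaussianReal_eq_integral_smul hv,
    ← integral_const_mul, ← integral_sub (integrable_gaussianPDFReal _ _).integrableOn
      ((integrable_gaussianPDFReal _ _).integrableOn.const_mul _),
    ← integral_indicator measurableSet_Ici]
  congr 1
  ext x
  have key : Real.exp (ε - m + σ ^ 2 / 2) * gaussianPDFReal (m - σ ^ 2) (Real.toNNReal (σ ^ 2)) x
      = gaussianPDFReal m (Real.toNNReal (σ ^ 2)) x * Real.exp (-(x - ε)) := by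
    simp only [gaussianPDFReal, Real.coe_toNNReal _ (sq_nonneg σ)]
    rw [mul_left_comm, mul_assoc (_⁻¹), ← Real.exp_add, ← Real.exp_add]
    congr 2
    field_simp
    ring
  by_cases hx : ε ≤ x
  · rw [Set.indicator_of_mem (by exact hx), key, max_eq_left, smul_eq_mul]
    · ring
    · have : Real.exp (-(x - ε)) ≤ 1 := Real.exp_le_one_iff.2 (by linarith)
      linarith
  · rw [Set.indicator_of_notMem (by exact hx), max_eq_right, smul_zero]
    have : 1 ≤ Real.exp (-(x - ε)) := Real.one_le_exp (by linarith)
    linarith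
end

section
/- Let L be a real random variable such that M_L(z) = E[e^{zL}] is finite for all real z in an open interval containing a point t > 0 (so M_L(t+is) = E[e^{(t+is)L}] is well defined for all s ∈ ℝ, with |M_L(t+is)| ≤ M_L(t)). Then for every ε ≥ 0, δ_L(ε) = (1/(2π)) ∫_{−∞}^{∞} e^{−(t+is)ε} · M_L(t+is) / ((t+is)·(t+is+1)) ds, where the integral is an absolutely convergent integral of a complex-valued function whose value is the real number δ_L(ε). -/
open MeasureTheory Real Complex

theorem aux_mellin {s : ℂ} (hs : 0 < s.re) :
    HasMellin (fun u : ℝ => ((max (1 - u) 0 : ℝ) : ℂ)) s (1 / (s * (s + 1))) := by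
  have h1 := hasMellin_one_Ioc hs
  have h2 := hasMellin_cpow_Ioc 1 (s := s) (by simp; linarith)
  have h3 := hasMellin_sub h1.1 h2.1
  rw [h1.2, h2.2] at h3
  have hs0 : s ≠ 0 := by rintro rfl; simp at hs
  have hs1 : s + 1 ≠ 0 := by
    intro h
    have := congrArg Complex.re h
    simp at this
    linarith
  have he : (1 / s - 1 / (s + 1)) = 1 / (s * (s + 1)) := by field_simp; ring
  rw [he] at h3
  have key : ∀ u ∈ Set.Ioi (0 : ℝ), (u : ℂ) ^ (s - 1) •
      (Set.indicator (Set.Ioc 0 1) (fun _ => 1 : ℝ → ℂ) u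
        - Set.indicator (Set.Ioc 0 1) (fun t => (t : ℂ) ^ (1 : ℂ) : ℝ → ℂ) u) =
      (u : ℂ) ^ (s - 1) • ((max (1 - u) 0 : ℝ) : ℂ) := by
    intro u hu
    congr 1
    have hupos : 0 < u := hu
    by_cases h : u ≤ 1
    · have hm : u ∈ Set.Ioc (0 : ℝ) 1 := ⟨hupos, h⟩
      rw [Set.indicator_of_mem hm, Set.indicator_of_mem hm, max_eq_left (by linarith)]
      simp
    · have hm : u ∉ Set.Ioc (0 : ℝ) 1 := fun hh => h hh.2
      rw [Set.indicator_of_notMem hm, Set.indicator_of_notMem hm,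
        max_eq_right (by linarith [not_le.mp h])]
      simp
  refine ⟨?_, ?_⟩
  · exact (integrableOn_congr_fun key measurableSet_Ioi).mp h3.1
  · rw [← h3.2]
    exact (setIntegral_congr_fun measurableSet_Ioi key).symm

theorem aux_ne {t : ℝ} (ht : 0 < t) (s : ℝ) :
    ((t : ℂ) + s * Complex.I) * ((t : ℂ) + s * Complex.I + 1) ≠ 0 := by
  refine mul_ne_zero ?_ ?_
  · intro h
    have := congrArg Complex.re h
    simp at this
    linarith
  · intro h
    have := congrArg Complex.re h
    simp at this
    linarith

theorem aux_cont {t : ℝ} (ht : 0 < t) : Continuous (fun s : ℝ =>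
    1 / (((t : ℂ) + s * Complex.I) * ((t : ℂ) + s * Complex.I + 1))) := by
  refine Continuous.div (by fun_prop) (by fun_prop) (aux_ne ht)

theorem aux_int {t : ℝ} (ht : 0 < t) : Integrable (fun s : ℝ =>
    1 / (((t : ℂ) + s * Complex.I) * ((t : ℂ) + s * Complex.I + 1))) := by
  refine (integrable_inv_one_add_sq.const_mul (1 + 1 / t ^ 2)).mono'
    (aux_cont ht).aestronglyMeasurable (Filter.Eventually.of_forall fun s => ?_)
  have h1 : ‖(t : ℂ) + s * Complex.I‖ ≤ ‖(t : ℂ) + s * Complex.I + 1‖ := by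
    rw [Complex.norm_def, Complex.norm_def]
    apply Real.sqrt_le_sqrt
    simp [Complex.normSq_apply]
    nlinarith
  have h2 : ‖(t : ℂ) + s * Complex.I‖ * ‖(t : ℂ) + s * Complex.I‖ = t ^ 2 + s ^ 2 := by
    rw [Complex.norm_mul_self_eq_normSq]
    simp [Complex.normSq_apply]
    ring
  have h3 : t ^ 2 + s ^ 2 ≤ ‖(t : ℂ) + s * Complex.I‖ * ‖(t : ℂ) + s * Complex.I + 1‖ := by
    rw [← h2]
    gcongr
  rw [norm_div, norm_mul, norm_one]
  have hp : 0 < t ^ 2 + s ^ 2 := by positivity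
  calc _ ≤ 1 / (t ^ 2 + s ^ 2) := by gcongr
    _ ≤ _ := by
      rw [← div_eq_mul_inv, div_le_div_iff₀ hp (by positivity)]
      have : (1 + 1 / t ^ 2) * (t ^ 2 + s ^ 2) = 1 + s ^ 2 + t ^ 2 + s ^ 2 / t ^ 2 := by
        field_simp; ring
      rw [this]
      have : 0 ≤ s ^ 2 / t ^ 2 := by positivity
      nlinarith [sq_nonneg t]

theorem aux_inv {t : ℝ} (ht : 0 < t) (x : ℝ) :
    (1 / (2 * (Real.pi : ℂ))) * ∫ s : ℝ, Complex.exp (((t : ℂ) + s * Complex.I) * x) *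
      (1 / (((t : ℂ) + s * Complex.I) * ((t : ℂ) + s * Complex.I + 1))) =
      ((max (1 - Real.exp (-x)) 0 : ℝ) : ℂ) := by
  have hm : ∀ s : ℝ, mellin (fun u : ℝ => ((max (1 - u) 0 : ℝ) : ℂ)) ((t : ℂ) + s * Complex.I)
      = 1 / (((t : ℂ) + s * Complex.I) * ((t : ℂ) + s * Complex.I + 1)) := fun s =>
    (aux_mellin (by simpa using ht)).2
  have h := mellinInv_mellin_eq t (fun u : ℝ => ((max (1 - u) 0 : ℝ) : ℂ)) (Real.exp_pos (-x))
    (aux_mellin (by simpa using ht)).1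
    (by
      unfold Complex.VerticalIntegrable
      simp_rw [hm]
      exact aux_int ht)
    (by fun_prop)
  rw [← h, mellinInv, Complex.real_smul]
  push_cast
  congr 1
  refine integral_congr_ae (Filter.Eventually.of_forall fun s => ?_)
  simp only []
  rw [hm, smul_eq_mul, ← Complex.ofReal_neg, ← Complex.ofReal_exp,
    Complex.cpow_def_of_ne_zero (by exact_mod_cast (Real.exp_pos _).ne'), ← Complex.ofReal_log (Real.exp_pos _).le,
    Real.log_exp]
  congr 2
  push_cast
  ring

/-- Fourier-analytic representation of the privacy curve: if the MGF of `L` is finite on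
an open interval around `t > 0`, then for every `ε ≥ 0`,
`δ_L(ε) = (1/2π) ∫_{-∞}^{∞} e^{-(t+is)ε} M_L(t+is) / ((t+is)(t+is+1)) ds`,
where the integrand is absolutely integrable and `M_L(z) = E[e^{zL}]`. -/
theorem stmt19 {Ω : Type*} [MeasurableSpace Ω] (μ : Measure Ω) [IsProbabilityMeasure μ]
    (L : Ω → ℝ) (hL : Measurable L) (t : ℝ) (ht : 0 < t)
    (hM : ∃ a c : ℝ, a < t ∧ t < c ∧ ∀ z : ℝ, a < z → z < c →
      Integrable (fun ω => Real.exp (z * L ω)) μ)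
    (ε : ℝ) (hε : 0 ≤ ε) :
    Integrable (fun s : ℝ =>
        Complex.exp (-((t : ℂ) + s * Complex.I) * (ε : ℂ)) *
          (∫ ω, Complex.exp (((t : ℂ) + s * Complex.I) * (L ω : ℂ)) ∂μ) /
          (((t : ℂ) + s * Complex.I) * ((t : ℂ) + s * Complex.I + 1)))
      (volume : Measure ℝ) ∧
    (1 / (2 * (Real.pi : ℂ))) *
        ∫ s : ℝ, Complex.exp (-((t : ℂ) + s * Complex.I) * (ε : ℂ)) *
          (∫ ω, Complex.exp (((t : ℂ) + s * Complex.I) * (L ω : ℂ)) ∂μ) /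
          (((t : ℂ) + s * Complex.I) * ((t : ℂ) + s * Complex.I + 1)) =
      ((∫ ω, max (1 - Real.exp (-(L ω - ε))) 0 ∂μ : ℝ) : ℂ) := by
  obtain ⟨a, c, hat, htc, hI⟩ := hM
  have hIt := hI t hat htc
  set F : ℝ → Ω → ℂ := fun s ω => Complex.exp (((t : ℂ) + s * Complex.I) * ((L ω - ε : ℝ) : ℂ)) *
      (1 / (((t : ℂ) + s * Complex.I) * ((t : ℂ) + s * Complex.I + 1))) with hF
  have hFint : Integrable (Function.uncurry F) ((volume : Measure ℝ).prod μ) := by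
    have hb := ((aux_int ht).norm.mul_prod (hIt.mul_const (Real.exp (-(t * ε)))))
    refine hb.mono' ?_ (Filter.Eventually.of_forall fun p => ?_)
    · have h1 := (aux_cont ht).measurable
      refine Measurable.aestronglyMeasurable ?_
      refine Measurable.mul ?_ (h1.comp measurable_fst)
      fun_prop
    · obtain ⟨s, ω⟩ := p
      simp only [Function.uncurry, hF]
      rw [norm_mul, mul_comm, Complex.norm_exp, ← Real.exp_add]
      apply le_of_eq
      congr 2
      simp
      ring
  have hE : (fun s : ℝ =>
        Complex.exp (-((t : ℂ) + s * Complex.I) * (ε : ℂ)) *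
          (∫ ω, Complex.exp (((t : ℂ) + s * Complex.I) * (L ω : ℂ)) ∂μ) /
          (((t : ℂ) + s * Complex.I) * ((t : ℂ) + s * Complex.I + 1))) =
      fun s => ∫ ω, F s ω ∂μ := by
    funext s
    rw [hF, integral_mul_const, ← integral_const_mul, div_eq_mul_one_div]
    congr 2
    funext ω
    rw [← Complex.exp_add]
    congr 1
    push_cast
    ring
  rw [hE]
  refine ⟨hFint.integral_prod_left, ?_⟩
  rw [integral_integral_swap hFint, ← integral_const_mul, ← integral_complex_ofReal]
  congr 1
  funext ω
  exact aux_inv ht (L ω - ε)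
end
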